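/- Let R be the quotient of ℂ⟨e1,e2,e3⟩ by the two-sided ideal generated by e1e2 + e2e1 − e3, e1e3 + e3e1 − e2, and e2e3 + e3e2 − e1. Then h_0 = 1, h_1 = h_2 = 0, h_3 = 1, and h_n = 0 for all n ≥ 4. -/

import Mathlib

open CategoryTheory FreeAlgebra

/-- `Ext^m_R(ℂ,ℂ)` as a ℂ-module, where `ℂ` is an `R`-module via the augmentation `ε`. -/
noncomputable def extC (R : Type) [Ring R] [Algebra ℂ R] (ε : R →ₐ[ℂ] ℂ) (m : ℕ) :
    ModuleCat ℂ :=
  letI : Module R ℂ := Module.compHom ℂ ε.toRingHom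
  ((Ext ℂ (ModuleCat R) m).obj (Opposite.op (ModuleCat.of R ℂ))).obj (ModuleCat.of R ℂ)

/-- `h_m = dim_ℂ Ext^m_R(ℂ,ℂ)`. -/
noncomputable def extDim (R : Type) [Ring R] [Algebra ℂ R] (ε : R →ₐ[ℂ] ℂ) (m : ℕ) : ℕ :=
  Module.finrank ℂ (extC R ε m)

/-- Relations: `e1e2 + e2e1 = e3`, `e1e3 + e3e1 = e2`, `e2e3 + e3e2 = e1`. -/
inductive CRel : FreeAlgebra ℂ (Fin 3) → FreeAlgebra ℂ (Fin 3) → Prop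
  | r12 : CRel (ι ℂ 0 * ι ℂ 1 + ι ℂ 1 * ι ℂ 0) (ι ℂ 2)
  | r13 : CRel (ι ℂ 0 * ι ℂ 2 + ι ℂ 2 * ι ℂ 0) (ι ℂ 1)
  | r23 : CRel (ι ℂ 1 * ι ℂ 2 + ι ℂ 2 * ι ℂ 1) (ι ℂ 0)

/-!
Put `u₊ = e₁ + e₂`, `u₋ = e₁ - e₂` and `h = e₃`. The relations become `h u_± = u_± (±1 - h)` and
`u_±² = z - h² ± h`, where `z = e₁² + e₂² + e₃²` is central. Hence `R` is a free right
`ℂ[z, h]`-module on the alternating words in `u₊` and `u₋`, which are indexed by `ℤ`, and each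
`M_c = R / R (h - c)` is free over `ℂ[z]` on the same words. In these bases right multiplication by
`u_±` is a weighted reflection of `ℤ`, from which one reads off an exact sequence
`0 → M₀ → M₁ ⊕ M₋₁ → M₀ → ℂ → 0` with maps `t ↦ (t u₊, -t u₋)` and `(a, b) ↦ a u₊ + b u₋`.
Replacing each `M_c` by its resolution `R → R`, `r ↦ r (h - c)`, gives a free resolution
`0 → R → R³ → R³ → R → ℂ → 0`; the entry `-2` of its middle differential is the homotopy forced by
`u₊² - u₋² = 2h`. The augmentation kills the two outer differentials and makes the middle one
invertible.
-/

open Module Matrix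

/-! ### Ext of the trivial module from a matrix resolution -/

theorem finrank_homology_add_finrank_range {K : Type*} [Field K] (S : ShortComplex (ModuleCat K))
    [Module.Finite K S.X₂] :
    finrank K S.homology + finrank K S.f.hom.range + finrank K S.g.hom.range =
      finrank K S.X₂ := by
  have range_toCycles : finrank K S.moduleCatToCycles.range = finrank K S.f.hom.range := by
    have range_eq : S.moduleCatToCycles.range = S.f.hom.range.comap S.g.hom.ker.subtype :=
      LinearMap.range_codRestrict _ _ _
    rw [range_eq]
    exact (Submodule.comapSubtypeEquivOfLe (LinearMap.range_le_ker_iff.2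
      (congrArg ModuleCat.Hom.hom S.zero))).finrank_eq
  have homology_eq : finrank K S.homology =
      finrank K (S.g.hom.ker ⧸ S.moduleCatToCycles.range) :=
    S.moduleCatHomologyIso.toLinearEquiv.finrank_eq
  rw [homology_eq, ← range_toCycles, Submodule.finrank_quotient_add_finrank, add_comm,
    LinearMap.finrank_range_add_finrank_ker]

theorem finrank_homology_add_finrank_range_d {K : Type*} [Field K] {I : Type*} {c : ComplexShape I}
    (C : HomologicalComplex (ModuleCat K) c) (i j k : I) (prev_eq : c.prev j = i)
    (next_eq : c.next j = k) [Module.Finite K (C.X j)] :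
    finrank K (C.homology j) + finrank K (C.d i j).hom.range + finrank K (C.d j k).hom.range =
      finrank K (C.X j) := by
  have : Module.Finite K (C.sc' i j k).X₂ := ‹_›
  rw [(C.homologyIsoSc' i j k prev_eq next_eq).toLinearEquiv.finrank_eq]
  exact finrank_homology_add_finrank_range (C.sc' i j k)

/-- The trivial module `ℂ` of an algebra `R` augmented by `ε`, as a type synonym of `ℂ`. -/
def TrivialModule {R : Type} [Ring R] [Algebra ℂ R] (_ε : R →ₐ[ℂ] ℂ) : Type := ℂ

namespace TrivialModule

variable {R : Type} [Ring R] [Algebra ℂ R] (ε : R →ₐ[ℂ] ℂ)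

instance : AddCommGroup (TrivialModule ε) := inferInstanceAs (AddCommGroup ℂ)

instance : Module ℂ (TrivialModule ε) := inferInstanceAs (Module ℂ ℂ)

instance : Module R (TrivialModule ε) := Module.compHom ℂ ε.toRingHom

/-- A homomorphism `Rⁿ → ℂ` is determined by the images of the standard basis vectors. -/
noncomputable def homEquiv (n : ℕ) :
    (ModuleCat.of R (Fin n → R) ⟶ ModuleCat.of R (TrivialModule ε)) ≃ₗ[ℂ] (Fin n → ℂ) :=
  AddEquiv.toLinearEquiv (ModuleCat.homAddEquiv.trans
      (LinearEquiv.piRing R (TrivialModule ε) (Fin n) ℕ).toAddEquiv)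
    fun c f => funext fun i => congrArg (· • f.hom (Pi.single i 1)) (ε.commutes c)

theorem homEquiv_vecMulLinear_comp {m n : ℕ} (A : Matrix (Fin m) (Fin n) R)
    (f : ModuleCat.of R (Fin n → R) ⟶ ModuleCat.of R (TrivialModule ε)) :
    homEquiv ε m (ModuleCat.ofHom A.vecMulLinear ≫ f) =
      (A.map ε).mulVecLin (homEquiv ε n f) := by
  ext i
  have row_eq : A.vecMulLinear (Pi.single i 1) = ∑ j, A i j • Pi.single j 1 := by
    ext k; simp [Finset.sum_apply, Pi.single_apply]
  calc f.hom (A.vecMulLinear (Pi.single i 1)) = ∑ j, A i j • f.hom (Pi.single j 1) := by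
        rw [row_eq, map_sum]; simp_rw [map_smul]
    _ = _ := rfl

end TrivialModule

/-- A resolution of the trivial module by finite free modules `R ^ rank n`. Elements are row
vectors, and the `n`-th differential is right multiplication by the matrix `d n`. -/
structure MatrixResolution {R : Type} [Ring R] [Algebra ℂ R] (ε : R →ₐ[ℂ] ℂ) where
  rank : ℕ → ℕ
  d (n : ℕ) : Matrix (Fin (rank (n + 1))) (Fin (rank n)) R
  aug : (Fin (rank 0) → R) →ₗ[R] TrivialModule ε
  aug_surjective : Function.Surjective aug
  exact_zero : Function.Exact (d 0).vecMulLinear aug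
  exact_succ (n : ℕ) : Function.Exact (d (n + 1)).vecMulLinear (d n).vecMulLinear

namespace MatrixResolution

variable {R : Type} [Ring R] [Algebra ℂ R] {ε : R →ₐ[ℂ] ℂ} (P : MatrixResolution ε)

/-- The chain complex `⋯ → R ^ rank 1 → R ^ rank 0`, without the augmentation. -/
noncomputable def complex : ChainComplex (ModuleCat R) ℕ :=
  ChainComplex.of (fun n => ModuleCat.of R (Fin (P.rank n) → R))
    (fun n => ModuleCat.ofHom (P.d n).vecMulLinear)
    (fun n => ModuleCat.hom_ext (P.exact_succ n).linearMap_comp_eq_zero)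

theorem complex_d (n : ℕ) : P.complex.d (n + 1) n = ModuleCat.ofHom (P.d n).vecMulLinear :=
  ChainComplex.of_d (fun n => ModuleCat.of R (Fin (P.rank n) → R))
    (fun n => ModuleCat.ofHom (P.d n).vecMulLinear) n

theorem complex_exactAt_succ (n : ℕ) : P.complex.ExactAt (n + 1) := by
  rw [HomologicalComplex.exactAt_iff' _ (n + 2) (n + 1) n (by simp only [ChainComplex.prev]; rfl)
    (by simp), ShortComplex.moduleCat_exact_iff_range_eq_ker]
  simp only [HomologicalComplex.shortComplexFunctor'_obj_f,
    HomologicalComplex.shortComplexFunctor'_obj_g, complex_d]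
  exact (P.exact_succ n).linearMap_ker_eq.symm

theorem complex_d_comp_aug : P.complex.d 1 0 ≫ ModuleCat.ofHom P.aug = 0 := by
  rw [complex_d]
  exact ModuleCat.hom_ext P.exact_zero.linearMap_comp_eq_zero

theorem aug_exact :
    (ShortComplex.mk (P.complex.d 1 0) (ModuleCat.ofHom P.aug) P.complex_d_comp_aug).Exact := by
  rw [ShortComplex.moduleCat_exact_iff_range_eq_ker]
  simp only [complex_d]
  exact P.exact_zero.linearMap_ker_eq.symm

/-- A matrix resolution as a projective resolution in the category of `R`-modules. -/
noncomputable def toProjectiveResolution :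
    ProjectiveResolution (ModuleCat.of R (TrivialModule ε)) where
  complex := P.complex
  projective n := inferInstanceAs (Projective (ModuleCat.of R (Fin (P.rank n) → R)))
  π := (ChainComplex.toSingle₀Equiv _ _).symm ⟨ModuleCat.ofHom P.aug, P.complex_d_comp_aug⟩
  quasiIso := ⟨fun n => by
    cases n with
    | zero =>
      rw [ChainComplex.quasiIsoAt₀_iff, ShortComplex.quasiIso_iff_of_zeros' _ rfl rfl rfl]
      refine (ShortComplex.exact_and_epi_g_iff_of_iso ?_).2
        ⟨P.aug_exact, (ModuleCat.epi_iff_surjective _).2 P.aug_surjective⟩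
      exact ShortComplex.isoMk (Iso.refl _) (Iso.refl _) (Iso.refl _)
        ((Category.id_comp _).trans (Category.comp_id _).symm)
        ((Category.id_comp _).trans (Category.comp_id _).symm)
    | succ n =>
      rw [quasiIsoAt_iff_exactAt' _ _ (ChainComplex.exactAt_succ_single_obj _ _)]
      exact P.complex_exactAt_succ n⟩

/-- The complex `Hom_R(R ^ rank n, ℂ)` that computes `Ext_R(ℂ, ℂ)`. -/
noncomputable abbrev cochains : CochainComplex (ModuleCat ℂ) ℕ :=
  P.complex.linearYonedaObj ℂ (ModuleCat.of R (TrivialModule ε))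

theorem extDim_eq_finrank_homology (n : ℕ) :
    extDim R ε n = finrank ℂ (P.cochains.homology n) :=
  (P.toProjectiveResolution.isoExt (R := ℂ) n _).toLinearEquiv.finrank_eq

/-- The coordinates of an `n`-cochain: its values on the standard basis of `R ^ rank n`. -/
noncomputable def cochainsEquiv (n : ℕ) : P.cochains.X n ≃ₗ[ℂ] (Fin (P.rank n) → ℂ) :=
  TrivialModule.homEquiv ε (P.rank n)

theorem cochainsEquiv_d (n : ℕ) (f : P.cochains.X n) :
    P.cochainsEquiv (n + 1) (P.cochains.d n (n + 1) f) =
      ((P.d n).map ε).mulVecLin (P.cochainsEquiv n f) := by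
  refine Eq.trans ?_ (TrivialModule.homEquiv_vecMulLinear_comp ε (P.d n) f)
  rw [← complex_d]
  rfl

theorem finrank_range_cochains_d (n : ℕ) :
    finrank ℂ (P.cochains.d n (n + 1)).hom.range = ((P.d n).map ε).rank := by
  have conj : (P.cochains.d n (n + 1)).hom =
      (P.cochainsEquiv (n + 1)).symm.toLinearMap ∘ₗ ((P.d n).map ε).mulVecLin ∘ₗ
        (P.cochainsEquiv n).toLinearMap := by
    ext f
    simpa [LinearEquiv.eq_symm_apply] using P.cochainsEquiv_d n f
  rw [conj, LinearMap.range_comp, LinearMap.range_comp_of_range_eq_top _ (LinearEquiv.range _)]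
  exact LinearEquiv.finrank_map_eq _ _

instance finite_cochains_X (n : ℕ) : Module.Finite ℂ (P.cochains.X n) :=
  Module.Finite.equiv (P.cochainsEquiv n).symm

theorem finrank_cochains_X (n : ℕ) : finrank ℂ (P.cochains.X n) = P.rank n := by
  rw [(P.cochainsEquiv n).finrank_eq, finrank_fin_fun]

theorem extDim_zero_add_rank : extDim R ε 0 + ((P.d 0).map ε).rank = P.rank 0 := by
  have dim_count := finrank_homology_add_finrank_range_d P.cochains 0 0 1 (by simp) (by simp)
  have d_zero_zero : P.cochains.d 0 0 = 0 := P.cochains.shape _ _ (by simp)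
  rwa [← P.extDim_eq_finrank_homology, d_zero_zero, P.finrank_range_cochains_d,
    P.finrank_cochains_X, ModuleCat.hom_zero, LinearMap.range_zero, finrank_bot, add_zero]
    at dim_count

theorem extDim_succ_add_rank_add_rank (n : ℕ) :
    extDim R ε (n + 1) + ((P.d n).map ε).rank + ((P.d (n + 1)).map ε).rank = P.rank (n + 1) := by
  have dim_count := finrank_homology_add_finrank_range_d P.cochains n (n + 1) (n + 2)
    (by simp) (by simp)
  rwa [← P.extDim_eq_finrank_homology, P.finrank_range_cochains_d,
    P.finrank_range_cochains_d, P.finrank_cochains_X] at dim_count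

end MatrixResolution

/-! ### Ladder operators and the Casimir element -/

namespace ColorSl2

set_option maxSynthPendingDepth 3

open Polynomial MulOpposite
open scoped Polynomial.Bivariate

theorem commute_sq_add_sq {A : Type*} [Ring A] {a b c : A} (hab : a * b + b * a = c)
    (hac : a * c + c * a = b) : Commute (b ^ 2 + c ^ 2) a := by
  have ab_eq : a * b = c - b * a := eq_sub_of_add_eq hab
  have ac_eq : a * c = b - c * a := eq_sub_of_add_eq hac
  have sq_left : a * b ^ 2 = c * b - b * c + b ^ 2 * a := by
    rw [sq, ← mul_assoc, ab_eq, sub_mul, mul_assoc b a b, ab_eq]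
    noncomm_ring
  have sq_right : a * c ^ 2 = b * c - c * b + c ^ 2 * a := by
    rw [sq, ← mul_assoc, ac_eq, sub_mul, mul_assoc c a c, ac_eq]
    noncomm_ring
  rw [commute_iff_eq, mul_add, sq_left, sq_right]
  noncomm_ring

/-- The algebra `R` of the theorem: the enveloping algebra of the color Lie algebra `𝔰𝔩₂ᶜ`. -/
def U : Type := RingQuot CRel

noncomputable instance : Ring U := inferInstanceAs (Ring (RingQuot CRel))

noncomputable instance : Algebra ℂ U := inferInstanceAs (Algebra ℂ (RingQuot CRel))

/-- The quotient map from the free algebra. -/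
noncomputable def mk : FreeAlgebra ℂ (Fin 3) →ₐ[ℂ] U := RingQuot.mkAlgHom ℂ CRel

/-- The generator `eᵢ₊₁` (indices are shifted by one). -/
noncomputable def gen (i : Fin 3) : U := mk (ι ℂ i)

theorem mk_rel {x y : FreeAlgebra ℂ (Fin 3)} (h : CRel x y) : mk x = mk y :=
  RingQuot.mkAlgHom_rel ℂ h

theorem gen_zero_anticomm_gen_one : gen 0 * gen 1 + gen 1 * gen 0 = gen 2 := by
  simpa only [gen, map_add, map_mul] using mk_rel CRel.r12

theorem gen_zero_anticomm_gen_two : gen 0 * gen 2 + gen 2 * gen 0 = gen 1 := by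
  simpa only [gen, map_add, map_mul] using mk_rel CRel.r13

theorem gen_one_anticomm_gen_two : gen 1 * gen 2 + gen 2 * gen 1 = gen 0 := by
  simpa only [gen, map_add, map_mul] using mk_rel CRel.r23

/-- The ladder operators `u₊ = e₁ + e₂` and `u₋ = e₁ - e₂`, indexed by their sign. -/
noncomputable def ladder (s : ℤˣ) : U := gen 0 + (s : ℤ) • gen 1

/-- The Cartan element `h = e₃`. -/
noncomputable def cartan : U := gen 2

/-- The Casimir element `z = e₁² + e₂² + e₃²`. -/
noncomputable def casimir : U := gen 0 ^ 2 + gen 1 ^ 2 + gen 2 ^ 2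

theorem ladder_one : ladder 1 = gen 0 + gen 1 := by simp [ladder]

theorem ladder_neg_one : ladder (-1) = gen 0 - gen 1 := by simp [ladder, sub_eq_add_neg]

theorem gen_zero_eq : gen 0 = (1 / 2 : ℂ) • (ladder 1 + ladder (-1)) := by
  rw [ladder_one, ladder_neg_one]; module

theorem gen_one_eq : gen 1 = (1 / 2 : ℂ) • (ladder 1 - ladder (-1)) := by
  rw [ladder_one, ladder_neg_one]; module

theorem cartan_mul_ladder (s : ℤˣ) : cartan * ladder s = ladder s * ((s : ℤ) - cartan) := by
  have h₀ : gen 2 * gen 0 = gen 1 - gen 0 * gen 2 :=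
    eq_sub_of_add_eq' gen_zero_anticomm_gen_two
  have h₁ : gen 2 * gen 1 = gen 0 - gen 1 * gen 2 :=
    eq_sub_of_add_eq' gen_one_anticomm_gen_two
  rcases Int.units_eq_one_or s with rfl | rfl
  · rw [ladder_one, cartan, mul_add, h₀, h₁]; push_cast; noncomm_ring
  · rw [ladder_neg_one, cartan, mul_sub, h₀, h₁]; push_cast; noncomm_ring

theorem ladder_mul_self (s : ℤˣ) :
    ladder s * ladder s = casimir - cartan ^ 2 + (s : ℤ) * cartan := by
  rcases Int.units_eq_one_or s with rfl | rfl
  · rw [ladder_one, casimir, cartan, ← gen_zero_anticomm_gen_one]; push_cast; noncomm_ring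
  · rw [ladder_neg_one, casimir, cartan, ← gen_zero_anticomm_gen_one]; push_cast; noncomm_ring

theorem commute_casimir_gen : ∀ i : Fin 3, Commute casimir (gen i)
  | 0 => by
    have rest := commute_sq_add_sq gen_zero_anticomm_gen_one gen_zero_anticomm_gen_two
    simpa only [casimir, add_assoc] using ((Commute.refl (gen 0)).pow_left 2).add_left rest
  | 1 => by
    have rest := commute_sq_add_sq ((add_comm _ _).trans gen_zero_anticomm_gen_one)
      gen_one_anticomm_gen_two
    simpa only [casimir, add_left_comm, add_assoc] using
      ((Commute.refl (gen 1)).pow_left 2).add_left rest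
  | 2 => (commute_sq_add_sq ((add_comm _ _).trans gen_zero_anticomm_gen_two)
      ((add_comm _ _).trans gen_one_anticomm_gen_two)).add_left
        ((Commute.refl (gen 2)).pow_left 2)

theorem commute_casimir_ladder (s : ℤˣ) : Commute casimir (ladder s) :=
  (commute_casimir_gen 0).add_right ((commute_casimir_gen 1).smul_right (s : ℤ))

@[elab_as_elim]
theorem induction_on {motive : U → Prop} (r : U)
    (algebraMap : ∀ c : ℂ, motive (algebraMap ℂ U c)) (ladder : ∀ s, motive (ladder s))
    (cartan : motive cartan) (add : ∀ a b, motive a → motive b → motive (a + b))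
    (mul : ∀ a b, motive a → motive b → motive (a * b)) : motive r := by
  have smul (c : ℂ) (a : U) (ha : motive a) : motive (c • a) := by
    rw [Algebra.smul_def]; exact mul _ _ (algebraMap c) ha
  have gen_mem (i : Fin 3) : motive (gen i) := by
    match i with
    | 0 => rw [gen_zero_eq]; exact smul _ _ (add _ _ (ladder 1) (ladder (-1)))
    | 1 =>
      rw [gen_one_eq, sub_eq_add_neg, ← neg_one_smul ℂ (ColorSl2.ladder (-1))]
      exact smul _ _ (add _ _ (ladder 1) (smul _ _ (ladder (-1))))
    | 2 => exact cartan
  obtain ⟨f, rfl⟩ : ∃ f, mk f = r := RingQuot.mkAlgHom_surjective ℂ CRel r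
  induction f using FreeAlgebra.induction with
  | grade0 c => simpa using algebraMap c
  | grade1 i => exact gen_mem i
  | mul a b ha hb => simpa using mul _ _ ha hb
  | add a b ha hb => simpa using add _ _ ha hb

section Lift

variable {A : Type*} [Ring A] [Algebra ℂ A] (u : ℤˣ → A) (c : A)
  (sq_sub_sq : u 1 * u 1 - u (-1) * u (-1) = 2 • c)
  (anticomm : ∀ s : ℤˣ, c * u s + u s * c = (s : ℤ) • u s)

/-- The homomorphism out of `U` given by a solution of the relations in terms of the ladder
operators and the Cartan element. -/
noncomputable def lift : U →ₐ[ℂ] A :=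
  RingQuot.liftAlgHom ℂ ⟨FreeAlgebra.lift ℂ
    ![(1 / 2 : ℂ) • (u 1 + u (-1)), (1 / 2 : ℂ) • (u 1 - u (-1)), c], fun _ _ rel => by
      have sq_eq := eq_add_of_sub_eq sq_sub_sq
      have plus : c * u 1 = u 1 - u 1 * c := eq_sub_of_add_eq (by simpa using anticomm 1)
      have minus : c * u (-1) = - u (-1) - u (-1) * c :=
        eq_sub_of_add_eq (by simpa using anticomm (-1))
      cases rel <;>
        simp only [map_add, map_mul, lift_ι_apply, cons_val, mul_smul_comm, smul_mul_assoc,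
          add_mul, mul_add, sub_mul, mul_sub, plus, minus, sq_eq] <;>
        module⟩

theorem lift_gen (i : Fin 3) : lift u c sq_sub_sq anticomm (gen i) =
    ![(1 / 2 : ℂ) • (u 1 + u (-1)), (1 / 2 : ℂ) • (u 1 - u (-1)), c] i :=
  (RingQuot.liftAlgHom_mkAlgHom_apply ℂ _ _ _).trans (lift_ι_apply _ _)

theorem lift_cartan : lift u c sq_sub_sq anticomm cartan = c := lift_gen ..

theorem lift_ladder (s : ℤˣ) : lift u c sq_sub_sq anticomm (ladder s) = u s := by
  rcases Int.units_eq_one_or s with rfl | rfl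
  · rw [ladder_one, map_add, lift_gen, lift_gen]
    simp only [cons_val]
    module
  · rw [ladder_neg_one, map_sub, lift_gen, lift_gen]
    simp only [cons_val]
    module

end Lift

theorem commute_aeval {K A : Type*} [CommSemiring K] [Semiring A] [Algebra K A] {a b : A}
    (h : Commute a b) (p : K[X]) : Commute (aeval a p) b := by
  induction p using Polynomial.induction_on' with
  | add p q hp hq => rw [map_add]; exact hp.add_left hq
  | monomial n k =>
    rw [aeval_monomial]
    exact (Algebra.commute_algebraMap_left k b).mul_left (h.pow_left n)

/-- The embedding of `ℂ[z, h]` into `U`; the inner variable is `z`, the outer one `h`. -/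
noncomputable def ofPoly : ℂ[X][Y] →ₐ[ℂ] U :=
  eval₂AlgHom (aeval casimir) cartan (commute_aeval (commute_casimir_gen 2))

theorem ofPoly_Y : ofPoly Y = cartan := eval₂_X _ _

theorem ofPoly_C (q : ℂ[X]) : ofPoly (C q) = aeval casimir q := eval₂_C _ _

/-- The substitution `h ↦ s - h`, the effect on `ℂ[z, h]` of moving past `ladder s`. -/
noncomputable def reflect (s : ℤˣ) : ℂ[X][Y] →ₐ[ℂ[X]] ℂ[X][Y] := aeval (((s : ℤ) : ℂ[X][Y]) - Y)

theorem reflect_Y (s : ℤˣ) : reflect s Y = ((s : ℤ) : ℂ[X][Y]) - Y := aeval_X _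

theorem reflect_C (s : ℤˣ) (q : ℂ[X]) : reflect s (C q) = C q := aeval_C _ _

theorem eval_reflect (s : ℤˣ) (p : ℂ[X][Y]) (a : ℂ[X]) :
    (reflect s p).eval a = p.eval ((s : ℤ) - a) := by
  rw [reflect, ← comp_eq_aeval, eval_comp, eval_sub, eval_intCast, eval_X]

theorem reflect_reflect (s : ℤˣ) (p : ℂ[X][Y]) : reflect s (reflect s p) = p := by
  have involutive : (reflect s).comp (reflect s) = AlgHom.id ℂ[X] ℂ[X][Y] :=
    Polynomial.algHom_ext (by simp [reflect_Y])
  exact DFunLike.congr_fun involutive p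

theorem ofPoly_mul_ladder (s : ℤˣ) (p : ℂ[X][Y]) :
    ofPoly p * ladder s = ladder s * ofPoly (reflect s p) := by
  induction p using Polynomial.induction_on with
  | C q => rw [reflect_C, ofPoly_C, (commute_aeval (commute_casimir_ladder s) q).eq]
  | add p q hp hq => rw [map_add, map_add, map_add, add_mul, mul_add, hp, hq]
  | monomial n q ih =>
    rw [pow_succ, ← mul_assoc, map_mul ofPoly (C q * Y ^ n), ofPoly_Y, mul_assoc,
      cartan_mul_ladder, ← mul_assoc, ih, map_mul (reflect s) (C q * Y ^ n), reflect_Y,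
      map_mul ofPoly (reflect s (C q * Y ^ n)), map_sub, map_intCast, ofPoly_Y, mul_assoc]

/-- The square of `ladder s`, as an element of `ℂ[z, h]`. -/
noncomputable def ladderSq (s : ℤˣ) : ℂ[X][Y] := C X - Y ^ 2 + ((s : ℤ) : ℂ[X][Y]) * Y

theorem ofPoly_ladderSq (s : ℤˣ) : ofPoly (ladderSq s) = ladder s * ladder s := by
  simp [ladderSq, ladder_mul_self, ofPoly_C, ofPoly_Y]

theorem reflect_ladderSq (s : ℤˣ) : reflect s (ladderSq s) = ladderSq s := by
  simp only [ladderSq, map_add, map_sub, map_mul, map_pow, map_intCast, reflect_C, reflect_Y]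
  ring

/-- The structure constants `word m * ladder s = word (s - m) * ladderCoeff s m`. -/
noncomputable def ladderCoeff (s : ℤˣ) (m : ℤ) : ℂ[X][Y] := if s * m ≤ 0 then 1 else ladderSq s

theorem ladderCoeff_of_nonpos {s : ℤˣ} {m : ℤ} (h : s * m ≤ 0) : ladderCoeff s m = 1 := if_pos h

theorem ladderCoeff_of_pos {s : ℤˣ} {m : ℤ} (h : 0 < s * m) : ladderCoeff s m = ladderSq s :=
  if_neg h.not_ge

theorem sign_mul_sub (s : ℤˣ) (m : ℤ) : (s : ℤ) * (s - m) = 1 - s * m := by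
  rw [mul_sub, Int.units_coe_mul_self]

theorem reflect_ladderCoeff_mul (s : ℤˣ) (m : ℤ) :
    reflect s (ladderCoeff s m) * ladderCoeff s (s - m) = ladderSq s := by
  rcases le_or_gt (s * m) 0 with hm | hm
  · rw [ladderCoeff_of_nonpos hm, ladderCoeff_of_pos (by rw [sign_mul_sub]; lia), map_one, one_mul]
  · rw [ladderCoeff_of_pos hm, ladderCoeff_of_nonpos (by rw [sign_mul_sub]; lia), reflect_ladderSq,
      mul_one]

/-! ### The basis of alternating words -/

/-- The free `ℂ[z, h]`-module on `ℤ`, in which `U` is coordinatised by the alternating words. -/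
abbrev Model : Type := ℤ →₀ ℂ[X][Y]

/-- Right multiplication by `ladder s` in coordinates. -/
noncomputable def ladderAct (s : ℤˣ) : End ℂ Model :=
  Finsupp.lsum ℂ fun m => Finsupp.lsingle (s - m) ∘ₗ
    LinearMap.mulRight ℂ (ladderCoeff s m) ∘ₗ (reflect s).toLinearMap.restrictScalars ℂ

theorem ladderAct_single (s : ℤˣ) (m : ℤ) (p : ℂ[X][Y]) :
    ladderAct s (.single m p) = .single (s - m) (reflect s p * ladderCoeff s m) := by
  simp [ladderAct]

theorem ladderAct_apply (s : ℤˣ) (x : Model) (k : ℤ) :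
    ladderAct s x k = reflect s (x (s - k)) * ladderCoeff s (s - k) := by
  induction x using Finsupp.induction_linear with
  | zero => simp
  | add x y hx hy => simp [hx, hy, add_mul]
  | single m p =>
    rw [ladderAct_single]
    by_cases hm : m = s - k
    · subst hm; simp
    · rw [Finsupp.single_eq_of_ne (by lia), Finsupp.single_eq_of_ne (by lia), map_zero, zero_mul]

theorem ladderAct_ladderAct (s : ℤˣ) (x : Model) :
    ladderAct s (ladderAct s x) = ladderSq s • x := by
  ext1 k
  rw [ladderAct_apply, ladderAct_apply, sub_sub_cancel, map_mul, reflect_reflect, mul_assoc,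
    reflect_ladderCoeff_mul, mul_comm, Finsupp.smul_apply, smul_eq_mul]

theorem ladderAct_smul (s : ℤˣ) (p : ℂ[X][Y]) (x : Model) :
    ladderAct s (p • x) = reflect s p • ladderAct s x := by
  ext1 k
  simp [ladderAct_apply, mul_assoc]

/-- The right `U`-module structure on the model, as a homomorphism to the opposite of `End`. -/
noncomputable def rightAct : U →ₐ[ℂ] (End ℂ Model)ᵐᵒᵖ :=
  lift (fun s => op (ladderAct s)) (op (Algebra.lsmul ℂ ℂ Model (Y : ℂ[X][Y])))
    (unop_injective <| LinearMap.ext fun x => by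
      simp only [MulOpposite.unop_sub, MulOpposite.unop_smul, unop_mul, unop_op,
        LinearMap.sub_apply, LinearMap.smul_apply, End.mul_apply, ladderAct_ladderAct, ladderSq,
        Algebra.lsmul_coe]
      push_cast
      module)
    (fun s => unop_injective <| LinearMap.ext fun x => by
      simp only [MulOpposite.unop_add, MulOpposite.unop_smul, unop_mul, unop_op,
        LinearMap.add_apply, LinearMap.smul_apply, End.mul_apply, ladderAct_smul, reflect_Y,
        Algebra.lsmul_coe]
      module)

theorem rightAct_ladder (s : ℤˣ) (x : Model) : (rightAct (ladder s)).unop x = ladderAct s x := by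
  rw [rightAct, lift_ladder, unop_op]

theorem rightAct_cartan (x : Model) : (rightAct cartan).unop x = (Y : ℂ[X][Y]) • x := by
  rw [rightAct, lift_cartan, unop_op, Algebra.lsmul_coe]

theorem rightAct_mul (a b : U) (x : Model) :
    (rightAct (a * b)).unop x = (rightAct b).unop ((rightAct a).unop x) := by
  rw [map_mul, unop_mul, Module.End.mul_apply]

theorem rightAct_algebraMap (c : ℂ) (x : Model) :
    (rightAct (algebraMap ℂ U c)).unop x = c • x := by
  rw [AlgHom.commutes]; rfl

theorem rightAct_casimir (x : Model) : (rightAct casimir).unop x = (C X : ℂ[X][Y]) • x := by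
  have casimir_eq : casimir = ladder 1 * ladder 1 + cartan * cartan - cartan := by
    rw [ladder_mul_self]; push_cast; noncomm_ring
  rw [casimir_eq, map_sub, map_add, MulOpposite.unop_sub, MulOpposite.unop_add,
    LinearMap.sub_apply, LinearMap.add_apply, rightAct_mul, rightAct_mul, rightAct_ladder,
    rightAct_ladder, ladderAct_ladderAct, rightAct_cartan, rightAct_cartan, ladderSq]
  push_cast
  module

theorem rightAct_ofPoly (p : ℂ[X][Y]) (x : Model) : (rightAct (ofPoly p)).unop x = p • x := by
  have eq_lsmul : rightAct.comp ofPoly = (Algebra.lsmul ℂ ℂ Model).toOpposite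
     (fun p q => (Commute.all p q).map _) := by
    refine Polynomial.algHom_ext' (Polynomial.algHom_ext ?_) ?_ <;>
      refine unop_injective (LinearMap.ext fun x => ?_)
    · simpa [ofPoly_C] using rightAct_casimir x
    · simpa [ofPoly_Y] using rightAct_cartan x
  exact DFunLike.congr_fun (congrArg unop (DFunLike.congr_fun eq_lsmul p)) x

/-- The alternating word of length `n` in the ladder operators that ends with `ladder s`. -/
noncomputable def altWord (s : ℤˣ) : ℕ → U
  | 0 => 1
  | n + 1 => altWord (-s) n * ladder s

/-- The alternating word of length `|m|` whose last letter is the ladder operator with the sign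
of `m`. -/
noncomputable def word : ℤ → U
  | .ofNat n => altWord 1 n
  | .negSucc n => altWord (-1) (n + 1)

theorem word_units_mul (s : ℤˣ) (n : ℕ) : word (s * n) = altWord s n := by
  rcases Int.units_eq_one_or s with rfl | rfl
  · rw [Units.val_one, one_mul]; rfl
  · rw [Units.val_neg, Units.val_one, neg_one_mul]; cases n <;> rfl

theorem word_zero : word 0 = 1 := rfl

theorem exists_eq_units_mul {s : ℤˣ} {m : ℤ} (h : 0 ≤ s * m) : ∃ n : ℕ, m = s * n := by
  obtain ⟨n, hn⟩ := Int.eq_ofNat_of_zero_le h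
  exact ⟨n, by rw [← hn, ← mul_assoc, Int.units_coe_mul_self, one_mul]⟩

theorem word_mul_ladder_of_nonpos {s : ℤˣ} {m : ℤ} (h : s * m ≤ 0) :
    word m * ladder s = word (s - m) := by
  obtain ⟨n, rfl⟩ := exists_eq_units_mul (s := -s) (m := m) (by simpa using h)
  have next_eq : (s : ℤ) - (-s : ℤˣ) * n = s * (n + 1 : ℕ) := by push_cast; ring
  rw [next_eq, word_units_mul, word_units_mul, altWord]

theorem word_mul_ladder (s : ℤˣ) (m : ℤ) :
    word m * ladder s = word (s - m) * ofPoly (ladderCoeff s m) := by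
  rcases le_or_gt (s * m) 0 with hm | hm
  · rw [ladderCoeff_of_nonpos hm, map_one, mul_one, word_mul_ladder_of_nonpos hm]
  · have previous := word_mul_ladder_of_nonpos (s := s) (m := s - m) (by rw [sign_mul_sub]; lia)
    rw [sub_sub_cancel] at previous
    rw [ladderCoeff_of_pos hm, ofPoly_ladderSq, ← previous, mul_assoc]

theorem rightAct_altWord (s : ℤˣ) (n : ℕ) :
    (rightAct (altWord s n)).unop (.single 0 1) = .single ((s : ℤ) * n) 1 := by
  induction n generalizing s with
  | zero => simp [altWord]
  | succ n ih =>
    have nonpos : (s : ℤ) * ((-s : ℤˣ) * n) ≤ 0 := by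
      rw [← mul_assoc, Units.val_neg, mul_neg, Int.units_coe_mul_self]; lia
    rw [altWord, rightAct_mul, ih, rightAct_ladder, ladderAct_single, map_one,
      ladderCoeff_of_nonpos nonpos, one_mul]
    congr 1
    push_cast
    ring

theorem rightAct_word (m : ℤ) : (rightAct (word m)).unop (.single 0 1) = .single m 1 := by
  rcases le_total 0 m with hm | hm
  · obtain ⟨n, rfl⟩ := exists_eq_units_mul (s := 1) (m := m) (by simpa using hm)
    rw [word_units_mul, rightAct_altWord]
  · obtain ⟨n, rfl⟩ := exists_eq_units_mul (s := -1) (m := m) (by simpa using hm)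
    rw [word_units_mul, rightAct_altWord]

/-- The linear map `x ↦ ∑ m, word m * x m`. -/
noncomputable def ofCoords : Model →ₗ[ℂ] U :=
  Finsupp.lsum ℂ fun m => LinearMap.mulLeft ℂ (word m) ∘ₗ ofPoly.toLinearMap

theorem ofCoords_single (m : ℤ) (p : ℂ[X][Y]) : ofCoords (.single m p) = word m * ofPoly p := by
  simp [ofCoords]

theorem ofCoords_ladderAct (s : ℤˣ) (x : Model) :
    ofCoords (ladderAct s x) = ofCoords x * ladder s := by
  induction x using Finsupp.induction_linear with
  | zero => simp
  | add x y hx hy => simp only [map_add, hx, hy, add_mul]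
  | single m p =>
    rw [ladderAct_single, ofCoords_single, ofCoords_single, mul_assoc, ofPoly_mul_ladder,
      ← mul_assoc, word_mul_ladder, mul_assoc, ← map_mul, mul_comm (reflect s p)]

theorem ofCoords_smul (p : ℂ[X][Y]) (x : Model) : ofCoords (p • x) = ofCoords x * ofPoly p := by
  induction x using Finsupp.induction_linear with
  | zero => simp
  | add x y hx hy => rw [smul_add, map_add, hx, hy, map_add, add_mul]
  | single m q =>
    rw [Finsupp.smul_single, ofCoords_single, ofCoords_single, smul_eq_mul, mul_comm p, map_mul,
      mul_assoc]

theorem ofCoords_rightAct (r : U) (x : Model) :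
    ofCoords ((rightAct r).unop x) = ofCoords x * r := by
  induction r using induction_on generalizing x with
  | algebraMap c => rw [rightAct_algebraMap, map_smul, Algebra.smul_def, Algebra.commutes]
  | ladder s => rw [rightAct_ladder, ofCoords_ladderAct]
  | cartan => rw [rightAct_cartan, ofCoords_smul, ofPoly_Y]
  | add a b ha hb =>
    rw [map_add, MulOpposite.unop_add, LinearMap.add_apply, map_add, ha, hb, mul_add]
  | mul a b ha hb => rw [rightAct_mul, hb, ha, mul_assoc]

/-- The coordinates of an element of `U` in the basis of alternating words, over which `U` is a
free right `ℂ[z, h]`-module. -/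
noncomputable def coords : U ≃ₗ[ℂ] Model :=
  .ofLinearMap
    (LinearMap.applyₗ (.single 0 1) ∘ₗ (opLinearEquiv ℂ).symm.toLinearMap ∘ₗ rightAct.toLinearMap)
    ofCoords
    (Finsupp.lhom_ext fun m p => by
      change (rightAct (ofCoords (.single m p))).unop (.single 0 1) = .single m p
      rw [ofCoords_single, rightAct_mul, rightAct_word, rightAct_ofPoly, Finsupp.smul_single,
        smul_eq_mul, mul_one])
    (LinearMap.ext fun r => by
      change ofCoords ((rightAct r).unop (.single 0 1)) = r
      rw [ofCoords_rightAct, ofCoords_single, word_zero, map_one, one_mul, one_mul])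

theorem coords_mul (r t : U) : coords (r * t) = (rightAct t).unop (coords r) := rightAct_mul ..

theorem coords_mul_ladder (r : U) (s : ℤˣ) : coords (r * ladder s) = ladderAct s (coords r) := by
  rw [coords_mul, rightAct_ladder]

theorem coords_mul_ofPoly (r : U) (p : ℂ[X][Y]) : coords (r * ofPoly p) = p • coords r := by
  rw [coords_mul, rightAct_ofPoly]

/-! ### The modules `U / U (h - c)` -/

/-- The weight of the edge from `s - k` to `k` in the graph on `ℤ` that describes right
multiplication by `ladder s` on the cyclic modules `U / U (h - c)`. -/
def edgeWeight {A : Type*} [One A] (p : A) (s : ℤˣ) (k : ℤ) : A := if 0 < s * k then 1 else p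

theorem edgeWeight_mem_nonZeroDivisors {A : Type*} [MonoidWithZero A] {p : A}
    (hp : p ∈ nonZeroDivisors A) (s : ℤˣ) (k : ℤ) : edgeWeight p s k ∈ nonZeroDivisors A := by
  unfold edgeWeight; split_ifs
  exacts [one_mem _, hp]

theorem exists_common_factor {A : Type*} [CommRing A] {p : A} (hp : p ∈ nonZeroDivisors A)
    {x y : ℤ →₀ A}
    (h : ∀ k, x (1 - k) * edgeWeight p 1 k + y (-1 - k) * edgeWeight p (-1) k = 0) :
    ∃ t : ℤ →₀ A, (∀ k, x k = t (1 - k) * edgeWeight p 1 k) ∧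
      ∀ k, y k = -(t (-1 - k) * edgeWeight p (-1) k) := by
  -- Each value of `t` is read off along the edge leaving its vertex with weight `1`.
  let t : ℤ →₀ A := (x.equivMapDomain (Equiv.subLeft 1)).filter (· ≤ 0) -
    (y.equivMapDomain (Equiv.subLeft (-1))).filter (0 < ·)
  have t_of_nonpos {k : ℤ} (hk : k ≤ 0) : t k = x (1 - k) := by
    simp [t, hk, neg_add_eq_sub]
  have t_of_pos {k : ℤ} (hk : 0 < k) : t k = -y (-1 - k) := by
    simp [t, hk, neg_add_eq_sub]
  refine ⟨t, fun k => ?_, fun k => ?_⟩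
  · have hk := h (1 - k)
    simp only [edgeWeight, sub_sub_cancel, Units.val_one, Units.val_neg] at hk ⊢
    rcases le_or_gt k 0 with k_nonpos | k_pos
    · rw [if_pos (by lia), if_neg (by lia)] at hk
      rw [t_of_pos (by lia), if_neg (by lia)]
      linear_combination hk
    · rw [t_of_nonpos (by lia), if_pos (by lia), sub_sub_cancel, mul_one]
  · have hk := h (-1 - k)
    simp only [edgeWeight, sub_sub_cancel, Units.val_one, Units.val_neg] at hk ⊢
    rcases lt_trichotomy k (-1) with k_lt | rfl | k_gt
    · rw [t_of_pos (by lia), if_pos (by lia), sub_sub_cancel, mul_one, neg_neg]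
    · have sum_mul : (x 1 + y (-1)) * p = 0 := by simpa [add_mul] using hk
      have sum_eq_zero := (mul_right_mem_nonZeroDivisors_eq_zero_iff hp).1 sum_mul
      simpa [t_of_nonpos] using eq_neg_of_add_eq_zero_right sum_eq_zero
    · rw [if_neg (by lia), if_pos (by lia)] at hk
      rw [t_of_nonpos (by lia), if_neg (by lia)]
      linear_combination hk

/-- The class of an element of `U` in the left module `U / U (h - c)`, which is free over `ℂ[z]`
on the alternating words. -/
noncomputable def residue (c : ℤ) : U →+ (ℤ →₀ ℂ[X]) :=
  (Finsupp.mapRange.addMonoidHom (evalRingHom (c : ℂ[X])).toAddMonoidHom).comp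
    coords.toLinearMap.toAddMonoidHom

theorem residue_apply (c : ℤ) (r : U) (k : ℤ) : residue c r k = (coords r k).eval (c : ℂ[X]) := rfl

theorem residue_surjective (c : ℤ) : Function.Surjective (residue c) := fun x =>
  ⟨coords.symm (x.mapRange C (map_zero C)), by ext1 k; simp [residue_apply]⟩

theorem cartan_sub_intCast (c : ℤ) : cartan - (c : U) = ofPoly (Y - C (c : ℂ[X])) := by
  simp [ofPoly_Y]

theorem isRightRegular_cartan_sub (c : ℤ) : IsRightRegular (cartan - (c : U)) := by
  intro a b hab
  refine coords.injective (smul_right_injective Model (X_sub_C_ne_zero (c : ℂ[X])) ?_)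
  simpa only [cartan_sub_intCast, coords_mul_ofPoly] using congrArg coords hab

theorem residue_eq_zero_iff (c : ℤ) (r : U) :
    residue c r = 0 ↔ ∃ q, q * (cartan - (c : U)) = r := by
  constructor
  · intro hr
    refine ⟨coords.symm ((coords r).mapRange (· /ₘ (X - C (c : ℂ[X]))) (zero_divByMonic _)),
      coords.injective ?_⟩
    ext1 k
    rw [cartan_sub_intCast, coords_mul_ofPoly, LinearEquiv.apply_symm_apply, Finsupp.smul_apply,
      Finsupp.mapRange_apply, smul_eq_mul, mul_divByMonic_eq_iff_isRoot]
    exact DFunLike.congr_fun hr k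
  · rintro ⟨q, rfl⟩
    ext1 k
    rw [residue_apply, cartan_sub_intCast, coords_mul_ofPoly, Finsupp.smul_apply, smul_eq_mul,
      eval_mul, eval_sub, eval_X, eval_C, sub_self, zero_mul, Finsupp.zero_apply]

theorem eval_ladderCoeff {s : ℤˣ} {c c' : ℤ} (add_eq : c + c' = s) (mul_eq : c * c' = 0) (k : ℤ) :
    (ladderCoeff s (s - k)).eval (c : ℂ[X]) = edgeWeight X s k := by
  have eval_ladderSq : (ladderSq s).eval (c : ℂ[X]) = X := by
    have cast_mul_eq : (c : ℂ[X]) * c' = 0 := mod_cast mul_eq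
    simp only [ladderSq, ← add_eq, eval_add, eval_sub, eval_mul, eval_pow, eval_C, eval_X,
      eval_intCast]
    push_cast
    linear_combination cast_mul_eq
  rw [ladderCoeff, edgeWeight, sign_mul_sub]
  rcases le_or_gt (s * k) 0 with hk | hk
  · rw [if_neg (by lia), if_neg (by lia), eval_ladderSq]
  · rw [if_pos (by lia), if_pos hk, eval_one]

theorem residue_mul_ladder {s : ℤˣ} {c c' : ℤ} (add_eq : c + c' = s) (mul_eq : c * c' = 0)
    (r : U) (k : ℤ) :
    residue c (r * ladder s) k = residue c' r (s - k) * edgeWeight X s k := by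
  rw [residue_apply, coords_mul_ladder, ladderAct_apply, eval_mul, eval_ladderCoeff add_eq mul_eq,
    eval_reflect, residue_apply, ← add_eq, Int.cast_add, add_sub_cancel_left]

theorem X_mem_nonZeroDivisors : (X : ℂ[X]) ∈ nonZeroDivisors ℂ[X] :=
  mem_nonZeroDivisors_of_ne_zero X_ne_zero

theorem exists_mul_cartan_eq {s : ℤˣ} {t q : U} (h : t * ladder s = q * (cartan - (s : ℤ))) :
    ∃ t', t' * cartan = t := by
  have residue_units : residue s (t * ladder s) = 0 := (residue_eq_zero_iff s _).2 ⟨q, h.symm⟩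
  have residue_zero : residue 0 t = 0 := by
    ext1 k
    refine (mul_right_mem_nonZeroDivisors_eq_zero_iff
      (edgeWeight_mem_nonZeroDivisors X_mem_nonZeroDivisors s (s - k))).1 ?_
    simpa [residue_mul_ladder (c' := 0)] using DFunLike.congr_fun residue_units (s - k)
  simpa using (residue_eq_zero_iff 0 t).1 residue_zero

theorem exists_of_mul_ladder_add_mul_ladder {a b w : U}
    (h : a * ladder 1 + b * ladder (-1) = w * cartan) :
    ∃ t a' b', t * ladder 1 + a' * (cartan - 1) = a ∧
      -(t * ladder (-1)) + b' * (cartan + 1) = b := by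
  have residue_zero : residue 0 (a * ladder 1 + b * ladder (-1)) = 0 :=
    (residue_eq_zero_iff 0 _).2 ⟨w, by simp [h]⟩
  obtain ⟨τ, hτa, hτb⟩ := exists_common_factor X_mem_nonZeroDivisors
    (x := residue 1 a) (y := residue (-1) b) fun k => by
      have := DFunLike.congr_fun residue_zero k
      rw [map_add, Finsupp.add_apply, residue_mul_ladder (c' := 1) (by simp) (by simp),
        residue_mul_ladder (c' := -1) (by simp) (by simp)] at this
      simpa using this
  obtain ⟨t, rfl⟩ := residue_surjective 0 τ
  obtain ⟨a', ha'⟩ := (residue_eq_zero_iff 1 (a - t * ladder 1)).1 <| by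
    ext1 k
    rw [map_sub, Finsupp.sub_apply, residue_mul_ladder (c' := 0) (by simp) (by simp), hτa]
    simp
  obtain ⟨b', hb'⟩ := (residue_eq_zero_iff (-1) (b + t * ladder (-1))).1 <| by
    ext1 k
    rw [map_add, Finsupp.add_apply, residue_mul_ladder (c' := 0) (by simp) (by simp), hτb]
    simp
  push_cast [sub_neg_eq_add] at ha' hb'
  exact ⟨t, a', b', by rw [ha', add_sub_cancel], by rw [hb', add_comm b, neg_add_cancel_left]⟩

/-! ### The resolution -/

/-- The differential `U³ → U` of the resolution, acting on row vectors from the right. -/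
noncomputable def d₀ : Matrix (Fin 3) (Fin 1) U := !![ladder 1; ladder (-1); cartan]

/-- The differential `U³ → U³` of the resolution, acting on row vectors from the right. -/
noncomputable def d₁ : Matrix (Fin 3) (Fin 3) U :=
  !![ladder 1, -ladder (-1), -2; cartan - 1, 0, ladder 1; 0, cartan + 1, ladder (-1)]

/-- The differential `U → U³` of the resolution, acting on row vectors from the right. -/
noncomputable def d₂ : Matrix (Fin 1) (Fin 3) U := !![cartan, ladder 1, -ladder (-1)]

theorem vecMul_d₀ (a b c : U) :
    ![a, b, c] ᵥ* d₀ = ![a * ladder 1 + b * ladder (-1) + c * cartan] := by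
  simp [d₀, add_assoc]

theorem vecMul_d₁ (t a b : U) :
    ![t, a, b] ᵥ* d₁ =
      ![t * ladder 1 + a * (cartan - 1), -(t * ladder (-1)) + b * (cartan + 1),
        t * -2 + a * ladder 1 + b * ladder (-1)] := by
  simp [d₁, add_assoc]

theorem vecMul_d₂ (t : U) : ![t] ᵥ* d₂ = ![t * cartan, t * ladder 1, -(t * ladder (-1))] := by
  simp [d₂]

theorem ladder_sq_sub_ladder_sq :
    ladder 1 * ladder 1 - ladder (-1) * ladder (-1) = 2 * cartan := by
  rw [ladder_mul_self, ladder_mul_self]; push_cast; noncomm_ring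

theorem cartan_mul_ladder_one : cartan * ladder 1 = ladder 1 - ladder 1 * cartan := by
  simpa [mul_sub] using cartan_mul_ladder 1

theorem cartan_mul_ladder_neg_one :
    cartan * ladder (-1) = -ladder (-1) - ladder (-1) * cartan := by
  simpa [mul_sub] using cartan_mul_ladder (-1)

theorem d₁_mul_d₀ : d₁ * d₀ = 0 := by
  ext i j
  fin_cases i <;> fin_cases j
  · simpa [d₁, d₀, mul_apply, Fin.sum_univ_three, ← sub_eq_add_neg, sub_eq_zero] using
      ladder_sq_sub_ladder_sq
  · simp [d₁, d₀, mul_apply, Fin.sum_univ_three, sub_mul, cartan_mul_ladder_one]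
  · have anticomm : (cartan + 1) * ladder (-1) + ladder (-1) * cartan = 0 := by
      rw [add_mul, cartan_mul_ladder_neg_one]; noncomm_ring
    simpa [d₁, d₀, mul_apply, Fin.sum_univ_three] using anticomm

theorem d₂_mul_d₁ : d₂ * d₁ = 0 := by
  have ladder_sq := ladder_sq_sub_ladder_sq
  ext i j
  fin_cases i
  fin_cases j
  · simp [d₂, d₁, mul_apply, Fin.sum_univ_three, mul_sub, cartan_mul_ladder_one]
  · have anticomm : -(cartan * ladder (-1)) + -(ladder (-1) * (cartan + 1)) = 0 := by
      rw [cartan_mul_ladder_neg_one]; noncomm_ring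
    simpa [d₂, d₁, mul_apply, Fin.sum_univ_three] using anticomm
  · rw [two_mul, ← mul_two, sub_eq_iff_eq_add] at ladder_sq
    simp [d₂, d₁, mul_apply, Fin.sum_univ_three, ladder_sq]

theorem vecMulLinear_comp_eq_zero {A l m n : Type*} [Semiring A] [Fintype l] [Fintype m]
    {M : Matrix l m A} {N : Matrix m n A} (h : M * N = 0) :
    N.vecMulLinear ∘ₗ M.vecMulLinear = 0 :=
  LinearMap.ext fun v => by simp [vecMul_vecMul, h]

theorem exists_eq_vecCons_three {α : Type*} (v : Fin 3 → α) : ∃ a b c, v = ![a, b, c] :=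
  ⟨v 0, v 1, v 2, (FinVec.etaExpand_eq v).symm⟩

theorem exists_eq_vecCons_one {α : Type*} (v : Fin 1 → α) : ∃ a, v = ![a] :=
  ⟨v 0, (FinVec.etaExpand_eq v).symm⟩

theorem isRightRegular_cartan : IsRightRegular cartan := by
  simpa using isRightRegular_cartan_sub 0

theorem isRightRegular_cartan_sub_one : IsRightRegular (cartan - 1) := by
  simpa using isRightRegular_cartan_sub 1

theorem isRightRegular_cartan_add_one : IsRightRegular (cartan + 1) := by
  simpa using isRightRegular_cartan_sub (-1)

theorem exact_d₁_d₀ : Function.Exact d₁.vecMulLinear d₀.vecMulLinear := by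
  refine LinearMap.exact_of_comp_eq_zero_of_ker_le_range
    (vecMulLinear_comp_eq_zero d₁_mul_d₀) fun v hv => ?_
  obtain ⟨a, b, c, rfl⟩ := exists_eq_vecCons_three v
  have hv₀ : a * ladder 1 + b * ladder (-1) + c * cartan = 0 := by
    simpa [vecMul_d₀] using hv
  obtain ⟨t, a', b', rfl, rfl⟩ := exists_of_mul_ladder_add_mul_ladder
    ((eq_neg_of_add_eq_zero_left hv₀).trans (neg_mul c cartan).symm)
  have boundary : ![t, a', b'] ᵥ* d₁ ᵥ* d₀ = 0 := by rw [vecMul_vecMul, d₁_mul_d₀, vecMul_zero]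
  rw [vecMul_d₁, vecMul_d₀, cons_eq_zero_iff] at boundary
  have last_eq : t * -2 + a' * ladder 1 + b' * ladder (-1) = c :=
    isRightRegular_cartan (add_left_cancel (boundary.1.trans hv₀.symm))
  exact ⟨![t, a', b'], by rw [vecMulLinear_apply, vecMul_d₁, last_eq]⟩

theorem exact_d₂_d₁ : Function.Exact d₂.vecMulLinear d₁.vecMulLinear := by
  refine LinearMap.exact_of_comp_eq_zero_of_ker_le_range
    (vecMulLinear_comp_eq_zero d₂_mul_d₁) fun v hv => ?_
  obtain ⟨t, a, b, rfl⟩ := exists_eq_vecCons_three v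
  obtain ⟨hv₀, hv₁, -⟩ : t * ladder 1 + a * (cartan - 1) = 0 ∧
      -(t * ladder (-1)) + b * (cartan + 1) = 0 ∧ _ := by
    simpa [vecMul_d₁] using hv
  obtain ⟨q, rfl⟩ := exists_mul_cartan_eq (s := 1) (q := -a)
    (by simpa using eq_neg_of_add_eq_zero_left hv₀)
  have boundary : ![q] ᵥ* d₂ ᵥ* d₁ = 0 := by rw [vecMul_vecMul, d₂_mul_d₁, vecMul_zero]
  rw [vecMul_d₂, vecMul_d₁, cons_eq_zero_iff, cons_eq_zero_iff] at boundary
  have snd_eq : q * ladder 1 = a :=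
    isRightRegular_cartan_sub_one (add_left_cancel (boundary.1.trans hv₀.symm))
  have trd_eq : -(q * ladder (-1)) = b :=
    isRightRegular_cartan_add_one (add_left_cancel (boundary.2.1.trans hv₁.symm))
  exact ⟨![q], by rw [vecMulLinear_apply, vecMul_d₂, snd_eq, trd_eq]⟩

theorem exact_zero_d₂ : Function.Exact (0 : Matrix (Fin 0) (Fin 1) U).vecMulLinear
    d₂.vecMulLinear := by
  refine LinearMap.exact_of_comp_eq_zero_of_ker_le_range
    (vecMulLinear_comp_eq_zero (Matrix.zero_mul _)) fun v hv => ?_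
  obtain ⟨t, rfl⟩ := exists_eq_vecCons_one v
  have ht : t * cartan = 0 * cartan := by
    rw [LinearMap.mem_ker, vecMulLinear_apply, vecMul_d₂, cons_eq_zero_iff] at hv
    rw [hv.1, zero_mul]
  rw [isRightRegular_cartan ht, ← zero_empty, cons_zero_zero]
  exact zero_mem _

section Augmentation

variable {ε : U →ₐ[ℂ] ℂ}

theorem map_ladder_eq_zero (hε : ∀ i, ε (gen i) = 0) (s : ℤˣ) : ε (ladder s) = 0 := by
  rw [ladder, map_add, map_zsmul, hε, hε, smul_zero, add_zero]

theorem map_cartan_eq_zero (hε : ∀ i, ε (gen i) = 0) : ε cartan = 0 := hε 2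

theorem sub_algebraMap_mem_range_d₀ (hε : ∀ i, ε (gen i) = 0) (r : U) :
    ![r - algebraMap ℂ U (ε r)] ∈ d₀.vecMulLinear.range := by
  induction r using induction_on with
  | algebraMap c =>
    rw [ε.commutes, Algebra.algebraMap_self_apply, sub_self, ← zero_empty, cons_zero_zero]
    exact zero_mem _
  | ladder s =>
    rw [map_ladder_eq_zero hε]
    rcases Int.units_eq_one_or s with rfl | rfl
    · exact ⟨![1, 0, 0], by simp [vecMul_d₀]⟩
    · exact ⟨![0, 1, 0], by simp [vecMul_d₀]⟩
  | cartan =>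
    rw [map_cartan_eq_zero hε]
    exact ⟨![0, 0, 1], by simp [vecMul_d₀]⟩
  | add a b ha hb => simpa [add_sub_add_comm] using add_mem ha hb
  | mul a b ha hb =>
    have product_rule : a * b - algebraMap ℂ U (ε (a * b)) =
        a * (b - algebraMap ℂ U (ε b)) + algebraMap ℂ U (ε b) * (a - algebraMap ℂ U (ε a)) := by
      rw [mul_sub, mul_sub, ← Algebra.commutes (ε b) a, map_mul, map_mul, sub_add_sub_cancel,
        Algebra.commutes (ε b) (algebraMap ℂ U (ε a))]
    rw [product_rule]
    simpa only [smul_cons, smul_eq_mul, smul_empty, cons_add_cons, empty_add_empty] using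
      add_mem (Submodule.smul_mem _ a hb)
      (Submodule.smul_mem _ (algebraMap ℂ U (ε b)) ha)

/-- The augmentation `U → ℂ` as a map of modules. -/
noncomputable def augmentation (ε : U →ₐ[ℂ] ℂ) : (Fin 1 → U) →ₗ[U] TrivialModule ε :=
  LinearMap.toSpanSingleton U (TrivialModule ε) (1 : ℂ) ∘ₗ LinearMap.proj 0

theorem augmentation_apply (v : Fin 1 → U) : augmentation ε v = ε (v 0) := mul_one (ε (v 0))

theorem augmentation_surjective : Function.Surjective (augmentation ε) := fun c =>
  ⟨![algebraMap ℂ U c], (augmentation_apply _).trans (ε.commutes c)⟩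

theorem exact_d₀_augmentation (hε : ∀ i, ε (gen i) = 0) :
    Function.Exact d₀.vecMulLinear (augmentation ε) := by
  refine LinearMap.exact_of_comp_eq_zero_of_ker_le_range (LinearMap.ext fun v => ?_) fun v hv => ?_
  · obtain ⟨a, b, c, rfl⟩ := exists_eq_vecCons_three v
    have map_vecMul : ε ((![a, b, c] ᵥ* d₀) 0) = 0 := by
      simp [vecMul_d₀, map_ladder_eq_zero hε, map_cartan_eq_zero hε]
    exact (augmentation_apply _).trans map_vecMul
  · obtain ⟨r, rfl⟩ := exists_eq_vecCons_one v
    have map_eq_zero : ε r = 0 := (augmentation_apply ![r]).symm.trans hv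
    simpa [map_eq_zero] using sub_algebraMap_mem_range_d₀ hε r

/-- The resolution `0 → U → U³ → U³ → U → ℂ → 0` of the trivial module. -/
noncomputable def resolution (hε : ∀ i, ε (gen i) = 0) : MatrixResolution ε where
  rank
    | 0 => 1
    | 1 => 3
    | 2 => 3
    | 3 => 1
    | _ + 4 => 0
  d
    | 0 => d₀
    | 1 => d₁
    | 2 => d₂
    | _ + 3 => 0
  aug := augmentation ε
  aug_surjective := augmentation_surjective
  exact_zero := exact_d₀_augmentation hε
  exact_succ
    | 0 => exact_d₁_d₀
    | 1 => exact_d₂_d₁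
    | 2 => exact_zero_d₂
    | _ + 3 => fun v => iff_of_true (vecMul_zero (m := Fin 0) (α := U) v)
        ⟨0, Subsingleton.elim (α := Fin 0 → U) _ _⟩

theorem map_d₀_eq_zero (hε : ∀ i, ε (gen i) = 0) : d₀.map ε = 0 := by
  ext i j
  fin_cases i <;> fin_cases j <;>
    simp [d₀, map_ladder_eq_zero hε, map_cartan_eq_zero hε]

theorem map_d₂_eq_zero (hε : ∀ i, ε (gen i) = 0) : d₂.map ε = 0 := by
  ext i j
  fin_cases i
  fin_cases j <;>
    simp [d₂, map_ladder_eq_zero hε, map_cartan_eq_zero hε]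

theorem rank_map_d₁ (hε : ∀ i, ε (gen i) = 0) : (d₁.map ε).rank = 3 := by
  have map_eq : d₁.map ε = !![0, 0, -2; -1, 0, 0; 0, 1, 0] := by
    ext i j
    fin_cases i <;> fin_cases j <;>
      simp [d₁, map_ladder_eq_zero hε, map_cartan_eq_zero hε, map_ofNat]
  have det_ne_zero : (d₁.map ε).det ≠ 0 := by
    simp [map_eq, det_fin_three]
  simpa using rank_of_isUnit _ ((isUnit_iff_isUnit_det _).2 det_ne_zero.isUnit)

end Augmentation

end ColorSl2

theorem betti_numbers (ε : RingQuot CRel →ₐ[ℂ] ℂ)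
    (hε : ∀ i : Fin 3, ε (RingQuot.mkAlgHom ℂ CRel (ι ℂ i)) = 0) :
    extDim (RingQuot CRel) ε 0 = 1 ∧ extDim (RingQuot CRel) ε 1 = 0 ∧
    extDim (RingQuot CRel) ε 2 = 0 ∧ extDim (RingQuot CRel) ε 3 = 1 ∧
    ∀ n ≥ 4, extDim (RingQuot CRel) ε n = 0 := by
  let P : MatrixResolution (R := RingQuot CRel) ε := ColorSl2.resolution hε
  have rank_d₀ : ((P.d 0).map ε).rank = 0 :=
    (congrArg rank (ColorSl2.map_d₀_eq_zero hε)).trans rank_zero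
  have rank_d₁ : ((P.d 1).map ε).rank = 3 := ColorSl2.rank_map_d₁ hε
  have rank_d₂ : ((P.d 2).map ε).rank = 0 :=
    (congrArg rank (ColorSl2.map_d₂_eq_zero hε)).trans rank_zero
  have rank_d₃ : ((P.d 3).map ε).rank = 0 := (rank_le_height _).antisymm (Nat.zero_le _)
  have dim_count₀ : _ = 1 := P.extDim_zero_add_rank
  have dim_count₁ : _ = 3 := P.extDim_succ_add_rank_add_rank 0
  have dim_count₂ : _ = 3 := P.extDim_succ_add_rank_add_rank 1
  have dim_count₃ : _ = 1 := P.extDim_succ_add_rank_add_rank 2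
  rw [rank_d₀] at dim_count₀ dim_count₁
  rw [rank_d₁] at dim_count₁ dim_count₂
  rw [rank_d₂] at dim_count₂ dim_count₃
  rw [rank_d₃] at dim_count₃
  refine ⟨by lia, by lia, by lia, by lia, fun n hn => ?_⟩
  obtain ⟨m, rfl⟩ := Nat.exists_eq_add_of_le' hn
  have dim_count : _ = 0 := P.extDim_succ_add_rank_add_rank (m + 3)
  exact (Nat.add_eq_zero_iff.1 (Nat.add_eq_zero_iff.1 dim_count).1).1
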